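/- Let G be a group acting by homeomorphisms on a nonempty topological space X. Suppose the action has only finitely many orbits, and that every orbit is a locally closed subset of X. Then at least one orbit is an open subset of X. -/

import Mathlib

/-!
Finitely many closed sets with empty interior cannot cover a nonempty space, so the closure of some
orbit has nonempty interior. That orbit is open in its closure, so it has nonempty interior itself,
and translating an interior point by the group shows that all of its points are interior.
-/

open MulAction Set

section Topology

variable {X : Type*} [TopologicalSpace X]

theorem exists_nonempty_interior_of_iUnion_of_isClosed_of_finite {ι : Type*} [Finite ι] [Nonempty X]
    {f : ι → Set X} (hc : ∀ i, IsClosed (f i)) (hU : ⋃ i, f i = univ) :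
    ∃ i, (interior (f i)).Nonempty := by
  by_contra! hempty
  have hdense : Dense (⋂₀ range fun i ↦ (f i)ᶜ) :=
    (finite_range _).dense_sInter (forall_mem_range.2 fun i ↦ (hc i).isOpen_compl)
      (forall_mem_range.2 fun i ↦ interior_eq_empty_iff_dense_compl.1 (hempty i))
  rw [sInter_range, ← compl_iUnion, hU, compl_univ] at hdense
  exact not_nonempty_empty hdense.nonempty

theorem interior_eq_coborder_inter_interior_closure_of_isLocallyClosed {s : Set X}
    (hs : IsLocallyClosed s) : interior s = coborder s ∩ interior (closure s) := by
  conv_lhs => rw [← coborder_inter_closure (s := s)]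
  rw [interior_inter, hs.isOpen_coborder.interior_eq]

theorem nonempty_interior_of_isLocallyClosed {s : Set X} (hs : IsLocallyClosed s)
    (h : (interior (closure s)).Nonempty) : (interior s).Nonempty := by
  obtain ⟨x, hx⟩ := h
  obtain ⟨y, hy, hys⟩ := mem_closure_iff.1 (interior_subset hx) _ isOpen_interior hx
  rw [interior_eq_coborder_inter_interior_closure_of_isLocallyClosed hs]
  exact ⟨y, subset_coborder hys, hy⟩

theorem exists_nonempty_interior_of_iUnion_of_isLocallyClosed_of_finite {ι : Type*} [Finite ι]
    [Nonempty X] {f : ι → Set X} (hf : ∀ i, IsLocallyClosed (f i)) (hU : ⋃ i, f i = univ) :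
    ∃ i, (interior (f i)).Nonempty := by
  have hU' : ⋃ i, closure (f i) = univ :=
    univ_subset_iff.1 (hU.symm.subset.trans (iUnion_mono fun _ ↦ subset_closure))
  obtain ⟨i, hi⟩ := exists_nonempty_interior_of_iUnion_of_isClosed_of_finite
    (fun _ ↦ isClosed_closure) hU'
  exact ⟨i, nonempty_interior_of_isLocallyClosed (hf i) hi⟩

end Topology

open scoped Pointwise in
theorem isOpen_orbit_of_nonempty_interior {G X : Type*} [Group G] [TopologicalSpace X]
    [MulAction G X] [ContinuousConstSMul G X] {x : X} (h : (interior (orbit G x)).Nonempty) :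
    IsOpen (orbit G x) := by
  obtain ⟨y, hy⟩ := h
  have hyx : orbit G y = orbit G x := orbit_eq_iff.2 (interior_subset hy)
  have hinv (g : G) : g • interior (orbit G x) = interior (orbit G x) := by
    rw [← interior_smul, smul_orbit]
  rw [← subset_interior_iff_isOpen]
  intro z hz
  obtain ⟨g, rfl⟩ := hyx.symm.subset hz
  exact (hinv g).subset (smul_mem_smul_set hy)

/-- If a group `G` acts by homeomorphisms on a nonempty topological space `X`
with finitely many orbits, each of which is locally closed, then some orbit is open. -/
theorem stmt_1 {G X : Type*} [Group G] [TopologicalSpace X] [Nonempty X]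
    [MulAction G X] [ContinuousConstSMul G X]
    (horb : Finite (MulAction.orbitRel.Quotient G X))
    (hlc : ∀ x : X, IsLocallyClosed (MulAction.orbit G x)) :
    ∃ x : X, IsOpen (MulAction.orbit G x) := by
  have hlc' (q : orbitRel.Quotient G X) : IsLocallyClosed q.orbit :=
    q.inductionOn' hlc
  obtain ⟨q, hq⟩ := exists_nonempty_interior_of_iUnion_of_isLocallyClosed_of_finite hlc'
    (univ_eq_iUnion_orbit G X).symm
  obtain ⟨x, rfl⟩ := Quotient.mk''_surjective q
  exact ⟨x, isOpen_orbit_of_nonempty_interior hq⟩
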